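/- Let K ≥ 0. Let u : ℝ² → ℂ be 2π-periodic and C¹ with |u|⁴ and ‖∇u‖² integrable on Q, and let n, v : ℝ² → ℝ be 2π-periodic with n², v² integrable on Q. Assume E(u,n,v) ≤ K and ‖u‖_{L⁴(T²)} ≤ K. Then ‖v‖_{L²(T²)}² ≤ 2K + K⁴ and ‖n‖_{L²(T²)} ≤ K² + (2K + K⁴)^{1/2}. -/

import Mathlib

open MeasureTheory Real Set

noncomputable section

abbrev R2 := EuclideanSpace ℝ (Fin 2)

def Q2 : Set R2 := {x | ∀ i, x i ∈ Icc (-π) π}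

def Periodic2 {E : Type*} (f : R2 → E) : Prop :=
  ∀ (x : R2) (k : Fin 2 → ℤ),
    f (x + (EuclideanSpace.equiv (Fin 2) ℝ).symm (fun i => 2 * π * (k i : ℝ))) = f x
/-- The Zakharov energy 𝓔(u,n,v). -/
noncomputable def zakharovEnergy (u : R2 → ℂ) (n v : R2 → ℝ) : ℝ :=
  (∫ x in Q2, ‖fderiv ℝ u x‖ ^ 2) + (1/2) * (∫ x in Q2, (n x) ^ 2)
    + (1/2) * (∫ x in Q2, (v x) ^ 2) + ∫ x in Q2, n x * ‖u x‖ ^ 2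

/-!
With `w = ‖u‖²`, completing the square turns the coupling of `n` and `u` into
`½‖n‖² + ⟪n, w⟫ = ½‖n + w‖² - ½‖w‖²` in `L²`. The gradient term is nonnegative, so
`‖n + w‖²` and `‖v‖²` are each at most twice the energy plus `‖w‖² = ‖u‖⁴_{L⁴}`, and the triangle
inequality recovers `‖n‖` from `‖n + w‖`.
-/

open scoped RealInnerProductSpace

section InnerProductSpace

variable {H : Type*} [SeminormedAddCommGroup H] [InnerProductSpace ℝ H]

theorem neg_norm_sq_le_norm_sq_add_two_mul_inner (x y : H) :
    -‖y‖ ^ 2 ≤ ‖x‖ ^ 2 + 2 * ⟪x, y⟫ := by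
  linarith [norm_add_sq_real x y, sq_nonneg ‖x + y‖]

theorem norm_le_norm_add_sqrt_of_norm_sq_add_two_mul_inner_le {x y : H} {c : ℝ}
    (h : ‖x‖ ^ 2 + 2 * ⟪x, y⟫ ≤ c) : ‖x‖ ≤ ‖y‖ + √(c + ‖y‖ ^ 2) := by
  have norm_add_le_sqrt : ‖x + y‖ ≤ √(c + ‖y‖ ^ 2) :=
    le_sqrt_of_sq_le (by linarith [norm_add_sq_real x y])
  calc ‖x‖ ≤ ‖x + y‖ + ‖y‖ := norm_le_add_norm_add x y
    _ ≤ ‖y‖ + √(c + ‖y‖ ^ 2) := by linarith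

theorem norm_sq_le_and_norm_le_of_energy_le {G : Type*} [SeminormedAddCommGroup G]
    {x y : H} {z : G} {T K B : ℝ} (hT : 0 ≤ T)
    (hE : T + 1 / 2 * ‖x‖ ^ 2 + 1 / 2 * ‖z‖ ^ 2 + ⟪x, y⟫ ≤ K) (hB : ‖y‖ ≤ B) :
    ‖z‖ ^ 2 ≤ 2 * K + B ^ 2 ∧ ‖x‖ ≤ B + √(2 * K + B ^ 2) := by
  have norm_sq_le : ‖y‖ ^ 2 ≤ B ^ 2 := by gcongr
  constructor
  · linarith [neg_norm_sq_le_norm_sq_add_two_mul_inner x y]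
  · have coupling_le : ‖x‖ ^ 2 + 2 * ⟪x, y⟫ ≤ 2 * K := by linarith [sq_nonneg ‖z‖]
    calc ‖x‖ ≤ ‖y‖ + √(2 * K + ‖y‖ ^ 2) :=
          norm_le_norm_add_sqrt_of_norm_sq_add_two_mul_inner_le coupling_le
      _ ≤ B + √(2 * K + B ^ 2) := by gcongr

end InnerProductSpace

section L2

variable {X H : Type*} [MeasurableSpace X] {μ : Measure X}
  [NormedAddCommGroup H] [InnerProductSpace ℝ H] {f g : X → H}

theorem inner_toLp_toLp_eq_integral (hf : MemLp f 2 μ) (hg : MemLp g 2 μ) :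
    ⟪hf.toLp f, hg.toLp g⟫ = ∫ a, ⟪f a, g a⟫ ∂μ := by
  rw [L2.inner_def]
  refine integral_congr_ae ?_
  filter_upwards [hf.coeFn_toLp, hg.coeFn_toLp] with a hfa hga
  rw [hfa, hga]

theorem norm_toLp_sq_eq_integral (hf : MemLp f 2 μ) :
    ‖hf.toLp f‖ ^ 2 = ∫ a, ‖f a‖ ^ 2 ∂μ := by
  simp only [← real_inner_self_eq_norm_sq, inner_toLp_toLp_eq_integral]

end L2

theorem le_pow_of_rpow_inv_natCast_le {x y : ℝ} {n : ℕ} (hn : n ≠ 0) (hx : 0 ≤ x)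
    (h : x ^ (n⁻¹ : ℝ) ≤ y) : x ≤ y ^ n := by
  rw [← rpow_inv_natCast_pow hx hn]
  gcongr

section L4

variable {X F : Type*} [MeasurableSpace X] {μ : Measure X} [NormedAddCommGroup F] {u : X → F}

theorem integrable_norm_pow_iff_memLp {p : ℕ} (hp : p ≠ 0) (hu : AEStronglyMeasurable u μ) :
    Integrable (fun a => ‖u a‖ ^ p) μ ↔ MemLp u p μ := by
  simpa using integrable_norm_rpow_iff hu (Nat.cast_ne_zero.2 hp) (ENNReal.natCast_ne_top p)

theorem memLp_two_norm_sq (hu : MemLp u 4 μ) : MemLp (fun a => ‖u a‖ ^ 2) 2 μ := by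
  have four_div_two : (4 : ENNReal) / 2 = 2 := by
    rw [show (4 : ENNReal) = 2 * 2 by norm_num,
      ENNReal.mul_div_cancel_right two_ne_zero ENNReal.ofNat_ne_top]
  simpa [four_div_two] using hu.norm_rpow_div 2

theorem norm_toLp_norm_sq_le (hu : MemLp u 4 μ) {M : ℝ}
    (hM : (∫ a, ‖u a‖ ^ 4 ∂μ) ^ ((1 : ℝ) / 4) ≤ M) :
    ‖(memLp_two_norm_sq hu).toLp‖ ≤ M ^ 2 := by
  have integral_le : ∫ a, ‖u a‖ ^ 4 ∂μ ≤ M ^ 4 :=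
    le_pow_of_rpow_inv_natCast_le four_ne_zero (integral_nonneg fun a => by positivity)
      (by simpa only [one_div, Nat.cast_ofNat] using hM)
  refine le_of_sq_le_sq ?_ (sq_nonneg M)
  simpa only [norm_toLp_sq_eq_integral, norm_pow, norm_norm, ← pow_mul] using integral_le

end L4

-- `T` stands for the kinetic energy `∫ ‖∇u‖²`.
theorem stmt11_general {X F : Type*} [MeasurableSpace X] {μ : Measure X} [NormedAddCommGroup F]
    {u : X → F} {n v : X → ℝ} {T K M : ℝ}
    (hu : MemLp u 4 μ) (hn : MemLp n 2 μ) (hv : MemLp v 2 μ) (hT : 0 ≤ T)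
    (hE : T + 1 / 2 * (∫ a, n a ^ 2 ∂μ) + 1 / 2 * (∫ a, v a ^ 2 ∂μ)
      + ∫ a, n a * ‖u a‖ ^ 2 ∂μ ≤ K)
    (hM : (∫ a, ‖u a‖ ^ 4 ∂μ) ^ ((1 : ℝ) / 4) ≤ M) :
    (∫ a, v a ^ 2 ∂μ) ≤ 2 * K + M ^ 4 ∧
      (∫ a, n a ^ 2 ∂μ) ^ ((1 : ℝ) / 2) ≤ M ^ 2 + (2 * K + M ^ 4) ^ ((1 : ℝ) / 2) := by
  have norm_toLp_sq {f : X → ℝ} (hf : MemLp f 2 μ) : ‖hf.toLp f‖ ^ 2 = ∫ a, f a ^ 2 ∂μ := by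
    simp only [norm_toLp_sq_eq_integral, norm_eq_abs, sq_abs]
  have coupling : ⟪hn.toLp n, (memLp_two_norm_sq hu).toLp⟫ = ∫ a, n a * ‖u a‖ ^ 2 ∂μ := by
    simp only [inner_toLp_toLp_eq_integral, Real.inner_apply]
  rw [← norm_toLp_sq hn, ← norm_toLp_sq hv, ← coupling] at hE
  rw [← norm_toLp_sq hn, ← norm_toLp_sq hv, ← sqrt_eq_rpow, ← sqrt_eq_rpow,
    sqrt_sq (norm_nonneg _), show M ^ 4 = (M ^ 2) ^ 2 by ring]
  exact norm_sq_le_and_norm_le_of_energy_le hT hE (norm_toLp_norm_sq_le hu hM)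

/-- Coercivity of the Zakharov energy (core of Lemma 5.1). -/
theorem stmt11 (K : ℝ) (hK : 0 ≤ K) (u : R2 → ℂ) (n v : R2 → ℝ)
    (hu_per : Periodic2 u) (hn_per : Periodic2 n) (hv_per : Periodic2 v)
    (hn_meas : Measurable n) (hv_meas : Measurable v)
    (hu_smooth : ContDiff ℝ 1 u)
    (hu4 : IntegrableOn (fun x => ‖u x‖ ^ 4) Q2)
    (hgrad : IntegrableOn (fun x => ‖fderiv ℝ u x‖ ^ 2) Q2)
    (hn2 : IntegrableOn (fun x => (n x) ^ 2) Q2)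
    (hv2 : IntegrableOn (fun x => (v x) ^ 2) Q2)
    (hE : zakharovEnergy u n v ≤ K)
    (hu4K : (∫ x in Q2, ‖u x‖ ^ 4) ^ ((1:ℝ)/4) ≤ K) :
    (∫ x in Q2, (v x) ^ 2) ≤ 2 * K + K ^ 4 ∧
      (∫ x in Q2, (n x) ^ 2) ^ ((1:ℝ)/2) ≤ K ^ 2 + (2 * K + K ^ 4) ^ ((1:ℝ)/2) := by
  exact stmt11_general
    ((integrable_norm_pow_iff_memLp four_ne_zero hu_smooth.continuous.aestronglyMeasurable).1 hu4)
    ((memLp_two_iff_integrable_sq hn_meas.aestronglyMeasurable).2 hn2)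
    ((memLp_two_iff_integrable_sq hv_meas.aestronglyMeasurable).2 hv2)
    (integral_nonneg fun x => sq_nonneg _) hE hu4K
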